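/- arXiv:2508.07045 — 6 statements merged into one kernel-verified Lean document; each statement's English description precedes it below -/
import Mathlib

section
/- Let ρ > 0, w̄ ≥ 0, ε ≥ 0, and α ≥ w̄/ρ + ε. Suppose v, s : ℝ → ℝ are differentiable on [0,∞), v'(τ) ≤ -ρ·v(τ) for all τ ≥ 0, s'(τ) = -ρ·s(τ) + w̄ for all τ ≥ 0, and v(0) + s(0) + ε ≤ α. Then v(τ) + s(τ) + ε ≤ α for all τ ≥ 0. -/
/-!
The excess `x = v + s + ε - α` satisfies `x' ≤ -ρ x + (w - ρ (α - ε)) ≤ -ρ x`, the last step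
being the lower bound on `α`. Hence `exp (ρ t) * x t` is antitone on `[0, ∞)`, and `x`, which
is nonpositive at `0`, stays nonpositive.
-/

/-- Scalar core of the robust positive invariance of the terminal set:
if `v` contracts as `v' ≤ -ρ v`, the tube size satisfies `s' = -ρ s + w̄`
with `w̄ ≥ 0`, `ε ≥ 0`, `α ≥ w̄/ρ + ε` and initially `v 0 + s 0 + ε ≤ α`,
then `v τ + s τ + ε ≤ α` for all `τ ≥ 0`. -/
theorem terminal_set_invariance_scalar
    (ρ w ε α : ℝ) (hρ : ρ > 0) (hw : w ≥ 0) (hε : ε ≥ 0)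
    (hα : α ≥ w / ρ + ε)
    (v s v' s' : ℝ → ℝ)
    (hv : ∀ τ ≥ (0 : ℝ), HasDerivAt v (v' τ) τ)
    (hs : ∀ τ ≥ (0 : ℝ), HasDerivAt s (s' τ) τ)
    (hv' : ∀ τ ≥ (0 : ℝ), v' τ ≤ -ρ * v τ)
    (hs' : ∀ τ ≥ (0 : ℝ), s' τ = -ρ * s τ + w)
    (h0 : v 0 + s 0 + ε ≤ α) :
    ∀ τ ≥ (0 : ℝ), v τ + s τ + ε ≤ α := by
  intro τ hτ
  have hbound : w ≤ (α - ε) * ρ := (div_le_iff₀ hρ).1 (by linarith)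
  have hderiv : ∀ t ≥ (0 : ℝ), HasDerivAt (fun t => Real.exp (ρ * t) * (v t + s t + ε - α))
      (Real.exp (ρ * t) * (ρ * (v t + s t + ε - α) + (v' t + s' t))) t := by
    intro t ht
    have he : HasDerivAt (fun t => Real.exp (ρ * t)) (Real.exp (ρ * t) * (ρ * 1)) t :=
      ((hasDerivAt_id t).const_mul ρ).exp
    have hx : HasDerivAt (fun t => v t + s t + ε - α) (v' t + s' t) t :=
      (((hv t ht).add (hs t ht)).add_const ε).sub_const α
    exact (he.mul hx).congr_deriv (by ring)
  have hanti : AntitoneOn (fun t => Real.exp (ρ * t) * (v t + s t + ε - α)) (Set.Ici 0) := by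
    refine antitoneOn_of_hasDerivWithinAt_nonpos (convex_Ici 0)
      (fun t ht => (hderiv t ht).continuousAt.continuousWithinAt)
      (fun t ht => (hderiv t (interior_subset ht)).hasDerivWithinAt) fun t ht => ?_
    have ht0 : t ≥ 0 := interior_subset ht
    have h1 := hv' t ht0
    have h2 := hs' t ht0
    exact mul_nonpos_of_nonneg_of_nonpos (Real.exp_pos _).le (by linarith)
  have hle := hanti Set.self_mem_Ici (Set.mem_Ici.2 hτ) hτ
  simp only [mul_zero, Real.exp_zero, one_mul] at hle
  have hnonpos : v τ + s τ + ε - α ≤ 0 :=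
    nonpos_of_mul_nonpos_right (hle.trans (by linarith)) (Real.exp_pos _)
  linarith
end

section
/- Let X be a real positive-definite n×n matrix, H a real p×n matrix, and c ≥ 0. If the block matrix fromBlocks (c²·I_p) (H·X) ((H·X)ᵀ) (X) is positive semidefinite, then for all x ∈ ℝⁿ, ‖H·x‖ ≤ c·√(xᵀ·X⁻¹·x), where ‖·‖ denotes the Euclidean norm on ℝᵖ. -/
open Matrix

/-!
Write `s = ‖H x‖²` and `q = xᵀ X⁻¹ x`. Testing the LMI on the block vectors `(H x, t X⁻¹ x)` shows
that the quadratic `q t² + 2 s t + c² s` in `t` is nonnegative everywhere, so its discriminant is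
nonpositive: `s² ≤ c² q s`. Cancelling `s` gives `s ≤ c² q`, and taking square roots gives the bound.
Using the discriminant rather than one particular `t` also covers `c = 0`.
-/

/-- Schur-complement reading of the tightening LMI: if `X ≻ 0`, `c ≥ 0`, and
`[[c² I, H X], [(H X)ᵀ, X]] ⪰ 0`, then the Euclidean norm of `H x` satisfies
`‖H x‖ ≤ c √(xᵀ X⁻¹ x)` for all `x`. -/
theorem tightening_lmi_bound
    {n p : ℕ}
    (X : Matrix (Fin n) (Fin n) ℝ)
    (H : Matrix (Fin p) (Fin n) ℝ)
    (c : ℝ)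
    (hX : X.PosDef) (hc : c ≥ 0)
    (hLMI : (Matrix.fromBlocks ((c ^ 2) • (1 : Matrix (Fin p) (Fin p) ℝ))
      (H * X) ((H * X)ᵀ) X).PosSemidef) :
    ∀ x : Fin n → ℝ,
      Real.sqrt ((H *ᵥ x) ⬝ᵥ (H *ᵥ x)) ≤ c * Real.sqrt (x ⬝ᵥ (X⁻¹ *ᵥ x)) := by
  intro x
  have hdet : IsUnit X.det := (Matrix.isUnit_iff_isUnit_det X).mp hX.isUnit
  have hXy : X *ᵥ (X⁻¹ *ᵥ x) = x := by
    rw [mulVec_mulVec, mul_nonsing_inv _ hdet, one_mulVec]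
  have hq : 0 ≤ x ⬝ᵥ (X⁻¹ *ᵥ x) := by
    simpa using hX.inv.posSemidef.dotProduct_mulVec_nonneg x
  have hs : 0 ≤ (H *ᵥ x) ⬝ᵥ (H *ᵥ x) := by
    simpa using dotProduct_star_self_nonneg (H *ᵥ x)
  have hHXy : (H * X) *ᵥ (X⁻¹ *ᵥ x) = H *ᵥ x := by rw [← mulVec_mulVec, hXy]
  have hcross : (X⁻¹ *ᵥ x) ⬝ᵥ ((H * X)ᵀ *ᵥ (H *ᵥ x)) = (H *ᵥ x) ⬝ᵥ (H *ᵥ x) := by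
    rw [mulVec_transpose, dotProduct_comm, ← dotProduct_mulVec, hHXy]
  have key : ∀ t : ℝ, 0 ≤ (x ⬝ᵥ (X⁻¹ *ᵥ x)) * (t * t)
      + (2 * ((H *ᵥ x) ⬝ᵥ (H *ᵥ x))) * t + c ^ 2 * ((H *ᵥ x) ⬝ᵥ (H *ᵥ x)) := by
    intro t
    have h := hLMI.dotProduct_mulVec_nonneg (Sum.elim (H *ᵥ x) (t • (X⁻¹ *ᵥ x)))
    rw [star_trivial, fromBlocks_mulVec] at h
    simp only [Sum.elim_comp_inl, Sum.elim_comp_inr, sumElim_dotProduct_sumElim, mulVec_smul,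
      hHXy, hXy, smul_mulVec, one_mulVec, dotProduct_add, dotProduct_smul, smul_dotProduct,
      hcross, smul_eq_mul] at h
    rw [dotProduct_comm (X⁻¹ *ᵥ x) x] at h
    linarith
  have hd := discrim_le_zero key
  unfold discrim at hd
  have hle : (H *ᵥ x) ⬝ᵥ (H *ᵥ x) ≤ c ^ 2 * (x ⬝ᵥ (X⁻¹ *ᵥ x)) := by
    rcases hs.eq_or_lt with h0 | h0
    · rw [← h0]; positivity
    · refine le_of_mul_le_mul_right ?_ h0
      linarith
  calc Real.sqrt ((H *ᵥ x) ⬝ᵥ (H *ᵥ x))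
      ≤ Real.sqrt (c ^ 2 * (x ⬝ᵥ (X⁻¹ *ᵥ x))) := Real.sqrt_le_sqrt hle
    _ = c * Real.sqrt (x ⬝ᵥ (X⁻¹ *ᵥ x)) := by
      rw [Real.sqrt_mul (sq_nonneg c), Real.sqrt_sq hc]
end

section
/- Let P be a real positive-definite n×n matrix, K a real m×n matrix, Lˣ ∈ ℝⁿ, Lᵘ ∈ ℝᵐ, l ∈ ℝ, s ≥ 0, ε ≥ 0, and c, c' ≥ 0 such that for all ξ ∈ ℝⁿ: |Lˣᵀ·ξ + Lᵘᵀ·(K·ξ)| ≤ c·√(ξᵀ·P·ξ) and |Lˣᵀ·ξ| ≤ c'·√(ξᵀ·P·ξ). Suppose x, x̂, z ∈ ℝⁿ and v ∈ ℝᵐ satisfy √((x̂ - z)ᵀ·P·(x̂ - z)) ≤ s, √((x - x̂)ᵀ·P·(x - x̂)) ≤ ε, and the tightened nominal constraint Lˣᵀ·z + Lᵘᵀ·v + c·s + c'·ε ≤ l. Then the closed-loop input u = v + K·(x̂ - z) satisfies the original constraint Lˣᵀ·x + Lᵘᵀ·u ≤ l. -/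
open Matrix

/-- Pointwise robust constraint satisfaction for one polytopic state-input
constraint (Proposition 1): if the tightening constants `c, c'` bound the
constraint functional in the `P`-metric, the controller error `x̂ - z` lies in
the tube of size `s`, the observer error `x - x̂` lies in the tube of size `ε`,
and the nominal pair `(z, v)` satisfies the tightened constraint, then the
closed-loop pair `(x, u)` with `u = v + K (x̂ - z)` satisfies the original
constraint. -/
theorem robust_state_input_constraint_satisfaction
    {n m : ℕ}
    (P : Matrix (Fin n) (Fin n) ℝ)
    (K : Matrix (Fin m) (Fin n) ℝ)
    (Lx : Fin n → ℝ) (Lu : Fin m → ℝ) (l : ℝ)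
    (s ε c c' : ℝ)
    (hP : P.PosDef) (hs : s ≥ 0) (hε : ε ≥ 0) (hc : c ≥ 0) (hc' : c' ≥ 0)
    (hcK : ∀ ξ : Fin n → ℝ,
      |Lx ⬝ᵥ ξ + Lu ⬝ᵥ (K *ᵥ ξ)| ≤ c * Real.sqrt (ξ ⬝ᵥ (P *ᵥ ξ)))
    (hc'x : ∀ ξ : Fin n → ℝ, |Lx ⬝ᵥ ξ| ≤ c' * Real.sqrt (ξ ⬝ᵥ (P *ᵥ ξ)))
    (x xh z : Fin n → ℝ) (v : Fin m → ℝ)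
    (hδ : Real.sqrt ((xh - z) ⬝ᵥ (P *ᵥ (xh - z))) ≤ s)
    (he : Real.sqrt ((x - xh) ⬝ᵥ (P *ᵥ (x - xh))) ≤ ε)
    (hnom : Lx ⬝ᵥ z + Lu ⬝ᵥ v + c * s + c' * ε ≤ l) :
    Lx ⬝ᵥ x + Lu ⬝ᵥ (v + K *ᵥ (xh - z)) ≤ l := by
  -- The deviation from the nominal pair splits as
  -- `Lx x + Lu u - (Lx z + Lu v) = (Lx + Lu K) (xh - z) + Lx (x - xh)`,
  -- and the two tightening terms bound the two summands.
  have h1 := (le_abs_self _).trans ((hcK (xh - z)).trans (mul_le_mul_of_nonneg_left hδ hc))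
  have h2 := (le_abs_self _).trans ((hc'x (x - xh)).trans (mul_le_mul_of_nonneg_left he hc'))
  rw [dotProduct_sub] at h1 h2
  rw [dotProduct_add]
  linarith
end

section
/- Let P be a real positive-definite n×n matrix, A_L a real n×n matrix, d ∈ ℝⁿ, λ > 0, and ε > 0, and assume that for all e ∈ ℝⁿ: eᵀ·(A_Lᵀ·P + P·A_L)·e + 2·eᵀ·P·d ≤ -λ·(eᵀ·P·e - ε²). If e : ℝ → ℝⁿ is differentiable, e'(t) = A_L·e(t) + d for all t ≥ 0, and e(0)ᵀ·P·e(0) ≤ ε², then e(t)ᵀ·P·e(t) ≤ ε² for all t ≥ 0. -/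
/-!
Write `V t = e tᵀ P e t`. Since `P` is symmetric, the derivative of `V` along the error dynamics is
`eᵀ (A_Lᵀ P + P A_L) e + 2 eᵀ P d`, so the S-procedure condition, evaluated at `e t`, says
`V' ≤ -λ (V - ε²)` for `t ≥ 0`. Hence `exp (λ t) (V t - ε²)` is nonincreasing on `[0, ∞)`; it is
nonpositive at `0`, therefore at all later times.
-/

open Matrix

theorem HasDerivAt.dotProduct_aux {m : ℕ} {u v : ℝ → Fin m → ℝ} {u' v' : Fin m → ℝ} {t : ℝ}
    (hu : HasDerivAt u u' t) (hv : HasDerivAt v v' t) :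
    HasDerivAt (fun s => u s ⬝ᵥ v s) (u' ⬝ᵥ v t + u t ⬝ᵥ v') t := by
  rw [hasDerivAt_pi] at hu hv
  simp only [dotProduct, ← Finset.sum_add_distrib]
  exact HasDerivAt.fun_sum fun i _ => (hu i).mul (hv i)

theorem HasDerivAt.mulVec_aux {m : ℕ} (P : Matrix (Fin m) (Fin m) ℝ) {u : ℝ → Fin m → ℝ}
    {u' : Fin m → ℝ} {t : ℝ} (hu : HasDerivAt u u' t) :
    HasDerivAt (fun s => P *ᵥ u s) (P *ᵥ u') t := by
  rw [hasDerivAt_pi] at hu ⊢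
  intro i
  simp only [mulVec, dotProduct]
  exact HasDerivAt.fun_sum fun j _ => (hu j).const_mul (P i j)

/-- The two halves of the product rule for `eᵀ P e` along `e' = A e + d` combine into the left-hand
side of the S-procedure condition, because `P` is symmetric. -/
theorem quadForm_deriv_eq {m : ℕ} {P : Matrix (Fin m) (Fin m) ℝ} (hP : Pᵀ = P)
    (A : Matrix (Fin m) (Fin m) ℝ) (d x : Fin m → ℝ) :
    (A *ᵥ x + d) ⬝ᵥ (P *ᵥ x) + x ⬝ᵥ (P *ᵥ (A *ᵥ x + d)) =
      x ⬝ᵥ ((Aᵀ * P + P * A) *ᵥ x) + 2 * (x ⬝ᵥ (P *ᵥ d)) := by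
  have hd : d ⬝ᵥ (P *ᵥ x) = x ⬝ᵥ (P *ᵥ d) := by
    rw [dotProduct_mulVec, ← mulVec_transpose, hP, dotProduct_comm]
  have hA : (A *ᵥ x) ⬝ᵥ (P *ᵥ x) = x ⬝ᵥ (Aᵀ *ᵥ (P *ᵥ x)) := by
    rw [dotProduct_mulVec x, vecMul_transpose]
  rw [add_dotProduct, mulVec_add, dotProduct_add, add_mulVec, dotProduct_add, hd, hA,
    mulVec_mulVec, mulVec_mulVec]
  ring

/-- Observer error tube: under the S-procedure condition
`eᵀ (A_Lᵀ P + P A_L) e + 2 eᵀ P d ≤ -λ (eᵀ P e - ε²)` for all `e`, the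
ellipsoid `{e : eᵀ P e ≤ ε²}` is positively invariant along `e' = A_L e + d`. -/
theorem observer_error_tube_invariance
    {n : ℕ}
    (P AL : Matrix (Fin n) (Fin n) ℝ) (d : Fin n → ℝ)
    (lam ε : ℝ)
    (hP : P.PosDef) (hlam : lam > 0) (hε : ε > 0)
    (hS : ∀ e : Fin n → ℝ,
      e ⬝ᵥ ((ALᵀ * P + P * AL) *ᵥ e) + 2 * (e ⬝ᵥ (P *ᵥ d)) ≤
        -lam * (e ⬝ᵥ (P *ᵥ e) - ε ^ 2))
    (e : ℝ → Fin n → ℝ)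
    (hdiff : Differentiable ℝ e)
    (hode : ∀ t ≥ (0 : ℝ), deriv e t = AL *ᵥ e t + d)
    (h0 : e 0 ⬝ᵥ (P *ᵥ e 0) ≤ ε ^ 2) :
    ∀ t ≥ (0 : ℝ), e t ⬝ᵥ (P *ᵥ e t) ≤ ε ^ 2 := by
  have hPt : Pᵀ = P := by simpa [IsHermitian] using hP.isHermitian
  have hV : ∀ t, HasDerivAt (fun s => e s ⬝ᵥ (P *ᵥ e s))
      (deriv e t ⬝ᵥ (P *ᵥ e t) + e t ⬝ᵥ (P *ᵥ deriv e t)) t := fun t =>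
    (hdiff t).hasDerivAt.dotProduct_aux ((hdiff t).hasDerivAt.mulVec_aux P)
  have hexp : ∀ t, HasDerivAt (fun s => Real.exp (lam * s)) (Real.exp (lam * t) * lam) t := by
    intro t
    simpa using ((hasDerivAt_id t).const_mul lam).exp
  have hg := fun t => (hexp t).fun_mul ((hV t).sub_const (ε ^ 2))
  have hanti : AntitoneOn
      (fun s => Real.exp (lam * s) * (e s ⬝ᵥ (P *ᵥ e s) - ε ^ 2)) (Set.Ici 0) := by
    refine antitoneOn_of_deriv_nonpos (convex_Ici 0)
      (fun t _ => (hg t).continuousAt.continuousWithinAt)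
      (fun t _ => (hg t).differentiableAt.differentiableWithinAt) fun t ht => ?_
    rw [interior_Ici] at ht
    rw [(hg t).deriv, hode t ht.le, quadForm_deriv_eq hPt]
    have h := mul_le_mul_of_nonneg_left (hS (e t)) (Real.exp_pos (lam * t)).le
    linarith
  intro t ht
  have h := hanti Set.self_mem_Ici ht ht
  simp only [mul_zero, Real.exp_zero, one_mul] at h
  have h1 : Real.exp (lam * t) * (e t ⬝ᵥ (P *ᵥ e t) - ε ^ 2) ≤ 0 := by linarith
  have h2 := nonpos_of_mul_nonpos_right h1 (Real.exp_pos _)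
  linarith
end

section
/- Let P, Q, R be real symmetric positive-semidefinite matrices of sizes n×n, n×n, and m×m respectively, let A be a real n×n matrix, B a real n×m matrix, and K a real m×n matrix, such that -((A + B·K)ᵀ·P + P·(A + B·K) + Q + Kᵀ·R·K) is positive semidefinite. If e : ℝ → ℝⁿ is differentiable with e'(t) = (A + B·K)·e(t) for all t, then for all 0 ≤ t₁ ≤ t₂: e(t₂)ᵀ·P·e(t₂) - e(t₁)ᵀ·P·e(t₁) ≤ -∫_{t₁}^{t₂} ( e(τ)ᵀ·Q·e(τ) + (K·e(τ))ᵀ·R·(K·e(τ)) ) dτ. -/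
/-!
With `F = A + B K` and `V x = xᵀ P x`, along a trajectory of `e' = F e` the derivative of `V (e t)`
is `eᵀ (Fᵀ P + P F) e`. The matrix inequality tested against `e t` bounds this by minus the stage
cost, and integrating over `[t₁, t₂]` with the fundamental theorem of calculus gives the claim.
-/

open Matrix

theorem continuous_quadForm {n : ℕ} (M : Matrix (Fin n) (Fin n) ℝ) {x : ℝ → Fin n → ℝ}
    (hx : Continuous x) : Continuous fun t => x t ⬝ᵥ (M *ᵥ x t) :=
  hx.dotProduct (continuous_const.matrix_mulVec hx)

theorem hasDerivAt_quadForm {n : ℕ} (M : Matrix (Fin n) (Fin n) ℝ) {x : ℝ → Fin n → ℝ}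
    {x' : Fin n → ℝ} {t : ℝ} (hx : HasDerivAt x x' t) :
    HasDerivAt (fun s => x s ⬝ᵥ (M *ᵥ x s)) (x' ⬝ᵥ (M *ᵥ x t) + x t ⬝ᵥ (M *ᵥ x')) t := by
  have hi := hasDerivAt_pi.1 hx
  have hM : ∀ i, HasDerivAt (fun s => (M *ᵥ x s) i) ((M *ᵥ x') i) t := fun i => by
    simp only [mulVec, dotProduct]
    exact HasDerivAt.fun_sum fun j _ => (hi j).const_mul (M i j)
  simp only [dotProduct, ← Finset.sum_add_distrib]
  exact HasDerivAt.fun_sum fun i _ => (hi i).mul (hM i)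

/-- The matrix inequality evaluated at a vector `x`: the derivative of `xᵀ P x` in the
direction `F x` is at most minus the stage cost at `x`. -/
theorem quadForm_deriv_le {n m : ℕ} (P Q F : Matrix (Fin n) (Fin n) ℝ)
    (R : Matrix (Fin m) (Fin m) ℝ) (K : Matrix (Fin m) (Fin n) ℝ)
    (h : (-(Fᵀ * P + P * F + Q + Kᵀ * R * K)).PosSemidef) (x : Fin n → ℝ) :
    (F *ᵥ x) ⬝ᵥ (P *ᵥ x) + x ⬝ᵥ (P *ᵥ (F *ᵥ x)) ≤
      -(x ⬝ᵥ (Q *ᵥ x) + (K *ᵥ x) ⬝ᵥ (R *ᵥ (K *ᵥ x))) := by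
  have h0 := h.dotProduct_mulVec_nonneg x
  have hT : ∀ {k : ℕ} (G : Matrix (Fin k) (Fin n) ℝ) (y : Fin k → ℝ),
      x ⬝ᵥ (Gᵀ *ᵥ y) = (G *ᵥ x) ⬝ᵥ y := fun G y => by
    rw [dotProduct_mulVec, vecMul_transpose]
  simp only [star_trivial, neg_mulVec, add_mulVec, dotProduct_neg, dotProduct_add,
    ← mulVec_mulVec, hT] at h0
  linarith

/-- Terminal cost decrease (Proposition 2, part 3): if
`(A + B K)ᵀ P + P (A + B K) + Q + Kᵀ R K ⪯ 0` with `P, Q, R ⪰ 0`, then along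
`e' = (A + B K) e` the decrease of the terminal cost `eᵀ P e` dominates the
accumulated stage cost `eᵀ Q e + (K e)ᵀ R (K e)`. -/
theorem terminal_cost_decrease
    {n m : ℕ}
    (P Q : Matrix (Fin n) (Fin n) ℝ) (R : Matrix (Fin m) (Fin m) ℝ)
    (A : Matrix (Fin n) (Fin n) ℝ) (B : Matrix (Fin n) (Fin m) ℝ)
    (K : Matrix (Fin m) (Fin n) ℝ)
    (hP : P.PosSemidef) (hQ : Q.PosSemidef) (hR : R.PosSemidef)
    (hLMI : (-((A + B * K)ᵀ * P + P * (A + B * K) + Q + Kᵀ * R * K)).PosSemidef)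
    (e : ℝ → Fin n → ℝ)
    (hdiff : Differentiable ℝ e)
    (hode : ∀ t : ℝ, deriv e t = (A + B * K) *ᵥ e t) :
    ∀ t₁ t₂ : ℝ, 0 ≤ t₁ → t₁ ≤ t₂ →
      e t₂ ⬝ᵥ (P *ᵥ e t₂) - e t₁ ⬝ᵥ (P *ᵥ e t₁) ≤
        -∫ τ in t₁..t₂,
          (e τ ⬝ᵥ (Q *ᵥ e τ) + (K *ᵥ e τ) ⬝ᵥ (R *ᵥ (K *ᵥ e τ))) := by
  intro t₁ t₂ _ ht
  have hV : ∀ t, HasDerivAt (fun s => e s ⬝ᵥ (P *ᵥ e s))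
      (((A + B * K) *ᵥ e t) ⬝ᵥ (P *ᵥ e t) + e t ⬝ᵥ (P *ᵥ ((A + B * K) *ᵥ e t))) t := fun t =>
    hasDerivAt_quadForm P (hode t ▸ (hdiff t).hasDerivAt)
  have he := hdiff.continuous
  have hFe : Continuous fun t => (A + B * K) *ᵥ e t := continuous_const.matrix_mulVec he
  have hVc : Continuous fun t =>
      ((A + B * K) *ᵥ e t) ⬝ᵥ (P *ᵥ e t) + e t ⬝ᵥ (P *ᵥ ((A + B * K) *ᵥ e t)) :=
    (hFe.dotProduct (continuous_const.matrix_mulVec he)).add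
      (he.dotProduct (continuous_const.matrix_mulVec hFe))
  have hSc : Continuous fun t => e t ⬝ᵥ (Q *ᵥ e t) + (K *ᵥ e t) ⬝ᵥ (R *ᵥ (K *ᵥ e t)) :=
    (continuous_quadForm Q he).add (continuous_quadForm R (continuous_const.matrix_mulVec he))
  rw [← intervalIntegral.integral_eq_sub_of_hasDerivAt (fun t _ => hV t)
    (hVc.intervalIntegrable t₁ t₂), ← intervalIntegral.integral_neg]
  exact intervalIntegral.integral_mono_on ht (hVc.intervalIntegrable t₁ t₂)
    (hSc.neg.intervalIntegrable t₁ t₂)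
    fun t _ => quadForm_deriv_le P Q (A + B * K) R K hLMI (e t)
end

section
/- Let ρ > 0 and w̄ ≥ 0. Suppose V : ℝ → ℝ is differentiable with V(t) > 0 and V'(t) ≤ -2ρ·V(t) + 2·w̄·√(V(t)) for all t ≥ 0, and suppose s : ℝ → ℝ is differentiable with s'(t) = -ρ·s(t) + w̄ for all t ≥ 0 and √(V(0)) ≤ s(0). Then √(V(t)) ≤ s(t) for all t ≥ 0. -/
/-!
Dividing the decrease condition by `2√V > 0` gives the linear inequality `(√V)' ≤ -ρ √V + w`.
Subtracting the tube dynamics, the difference `e = √V - s` satisfies `e' ≤ -ρ e`, so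
`exp (ρ t) * e t` has nonpositive derivative on `[0, ∞)` and stays below its initial
value, which is `≤ 0`.
-/

/-- From the disturbed Lyapunov decrease `V' ≤ -2ρ V + 2 w̄ √V` to the tube
containment `√(V t) ≤ s t`, where `s` solves the tube dynamics
`s' = -ρ s + w̄` and initially `√(V 0) ≤ s 0`. -/
theorem lyapunov_sqrt_tube_containment
    (ρ w : ℝ) (hρ : ρ > 0) (hw : w ≥ 0)
    (V V' s s' : ℝ → ℝ)
    (hV : ∀ t ≥ (0 : ℝ), HasDerivAt V (V' t) t)
    (hVpos : ∀ t ≥ (0 : ℝ), V t > 0)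
    (hV' : ∀ t ≥ (0 : ℝ), V' t ≤ -2 * ρ * V t + 2 * w * Real.sqrt (V t))
    (hs : ∀ t ≥ (0 : ℝ), HasDerivAt s (s' t) t)
    (hs' : ∀ t ≥ (0 : ℝ), s' t = -ρ * s t + w)
    (h0 : Real.sqrt (V 0) ≤ s 0) :
    ∀ t ≥ (0 : ℝ), Real.sqrt (V t) ≤ s t := by
  have hd : ∀ t ≥ (0 : ℝ), HasDerivAt (fun t => Real.exp (ρ * t) * (Real.sqrt (V t) - s t))
      (Real.exp (ρ * t) * ρ * (Real.sqrt (V t) - s t)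
        + Real.exp (ρ * t) * (V' t / (2 * Real.sqrt (V t)) - s' t)) t := by
    intro t ht
    have hexp : HasDerivAt (fun t : ℝ => Real.exp (ρ * t)) (Real.exp (ρ * t) * ρ) t := by
      simpa using ((hasDerivAt_id t).const_mul ρ).exp
    exact hexp.mul (((hV t ht).sqrt (hVpos t ht).ne').sub (hs t ht))
  have hanti : AntitoneOn (fun t => Real.exp (ρ * t) * (Real.sqrt (V t) - s t)) (Set.Ici 0) := by
    refine antitoneOn_of_hasDerivWithinAt_nonpos (convex_Ici 0)
      (fun t ht => (hd t ht).continuousAt.continuousWithinAt)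
      (fun t ht => (hd t (interior_subset ht)).hasDerivWithinAt) ?_
    intro t ht
    have ht0 : t ≥ 0 := interior_subset ht
    have hq : 0 < Real.sqrt (V t) := Real.sqrt_pos.mpr (hVpos t ht0)
    have hsq : V t = Real.sqrt (V t) * Real.sqrt (V t) :=
      (Real.mul_self_sqrt (hVpos t ht0).le).symm
    have hroot : V' t / (2 * Real.sqrt (V t)) ≤ -ρ * Real.sqrt (V t) + w := by
      rw [div_le_iff₀ (by positivity)]
      linear_combination hV' t ht0 - 2 * ρ * hsq
    rw [hs' t ht0]
    have hE := Real.exp_pos (ρ * t)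
    calc _ = Real.exp (ρ * t) *
          (V' t / (2 * Real.sqrt (V t)) - (-ρ * Real.sqrt (V t) + w)) := by ring
      _ ≤ 0 := mul_nonpos_of_nonneg_of_nonpos hE.le (by linarith)
  intro t ht
  have h := hanti (Set.mem_Ici.mpr le_rfl) (Set.mem_Ici.mpr ht) ht
  simp only [mul_zero, Real.exp_zero, one_mul] at h
  have hle : Real.exp (ρ * t) * (Real.sqrt (V t) - s t) ≤ 0 := by linarith
  exact sub_nonpos.mp (nonpos_of_mul_nonpos_right hle (Real.exp_pos _))
end
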